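/- Suppose there exists θ^L ∈ (0,1) such that u''(θ) < 0 for all θ ∈ [0,θ^L) at which u'' exists, and u''(θ) > 0 for all θ ∈ (θ^L,1] at which u'' exists. If there exists θ_*^L ∈ (θ^L,1) such that u(m_*^L) + u'(m_*^L)·(θ_*^L − m_*^L) = u(θ_*^L), where m_*^L = E_F[θ|(0,θ_*^L)], then the open pooling set P_* = [0,θ_*^L) is optimal for u, and m_*^L ∈ (0,θ^L). -/

import Mathlib

open MeasureTheory Set
open scoped Classical

noncomputable section

/-- CDF associated with the density `f` (relevant on `[0,1]`): `F(x) = ∫_0^x f`. -/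
def cdfF (f : ℝ → ℝ) (x : ℝ) : ℝ := ∫ t in (0:ℝ)..x, f t

/-- Conditional mean `E_F[θ | (ξ,ζ)]` of `θ` on the interval `(ξ, ζ)` under density `f`. -/
def condMean (f : ℝ → ℝ) (ξ ζ : ℝ) : ℝ :=
  (∫ t in ξ..ζ, t * f t) / (∫ t in ξ..ζ, f t)

/-- `f` is a strictly positive density of a probability measure on `[0,1]`. -/
def IsDensity (f : ℝ → ℝ) : Prop :=
  (∀ θ ∈ Icc (0:ℝ) 1, 0 < f θ) ∧ IntegrableOn f (Icc (0:ℝ) 1) ∧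
    (∫ t in (0:ℝ)..1, f t) = 1

/-- An open pooling set: a relatively open subset of `[0,1]`. -/
def IsPoolingSet (P : Set ℝ) : Prop :=
  ∃ U : Set ℝ, IsOpen U ∧ P = U ∩ Icc (0:ℝ) 1

/-- Left endpoint `ξ_i` of the interval component of `θ` in `P`. -/
def compInf (P : Set ℝ) (θ : ℝ) : ℝ := sInf (connectedComponentIn P θ)

/-- Right endpoint `ζ_i` of the interval component of `θ` in `P`. -/
def compSup (P : Set ℝ) (θ : ℝ) : ℝ := sSup (connectedComponentIn P θ)

/-- The posterior-mean map induced by the pooling set `P`: states in a pooled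
interval are mapped to the conditional mean of that interval, other states to
themselves. -/
def poolMean (f : ℝ → ℝ) (P : Set ℝ) (θ : ℝ) : ℝ :=
  if θ ∈ P then condMean f (compInf P θ) (compSup P θ) else θ

/-- The induced distribution `G_P` of posterior means. -/
def Gp (f : ℝ → ℝ) (P : Set ℝ) (θ : ℝ) : ℝ :=
  if θ ∈ P then
    (if θ < condMean f (compInf P θ) (compSup P θ) then cdfF f (compInf P θ)
     else cdfF f (compSup P θ))
  else cdfF f θ

/-- `Γ_P(θ) = ∫_0^θ G_P(t) dt`. -/
def Gam (f : ℝ → ℝ) (P : Set ℝ) (θ : ℝ) : ℝ := ∫ t in (0:ℝ)..θ, Gp f P t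

/-- The value `∫_0^1 u(θ) dG_P(θ)` of the pooling set `P` under payoff `u`,
written as the expectation of `u` composed with the posterior-mean map. -/
def poolValue (f : ℝ → ℝ) (u : ℝ → ℝ) (P : Set ℝ) : ℝ :=
  ∫ θ in (0:ℝ)..1, u (poolMean f P θ) * f θ

/-- `P` is an optimal pooling set for `u`. -/
def IsOptimal (f : ℝ → ℝ) (u : ℝ → ℝ) (P : Set ℝ) : Prop :=
  IsPoolingSet P ∧ ∀ Q : Set ℝ, IsPoolingSet Q → poolValue f u Q ≤ poolValue f u P

/-- `u` is continuously differentiable on `[0,1]` with derivative `u'`, and `u'`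
is absolutely continuous with integrable a.e. derivative `u''` (encoded via the
fundamental theorem of calculus). -/
def C1AC (u u' u'' : ℝ → ℝ) : Prop :=
  (∀ θ ∈ Icc (0:ℝ) 1, HasDerivAt u (u' θ) θ) ∧
  ContinuousOn u' (Icc (0:ℝ) 1) ∧
  IntegrableOn u'' (Icc (0:ℝ) 1) ∧
  (∀ θ ∈ Icc (0:ℝ) 1, u' θ = u' 0 + ∫ t in (0:ℝ)..θ, u'' t)


lemma hp_tangent {u u' : ℝ → ℝ} {a b : ℝ} (hd : ∀ x ∈ Icc a b, HasDerivAt u (u' x) x)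
    (hm : StrictMonoOn u' (Icc a b)) {x y : ℝ} (hx : x ∈ Icc a b) (hy : y ∈ Icc a b)
    (hxy : x ≠ y) : u x + u' x * (y - x) < u y := by
  rcases lt_or_gt_of_ne hxy with h | h
  · have hsub : Icc x y ⊆ Icc a b := Icc_subset_Icc hx.1 hy.2
    obtain ⟨c, hc, hce⟩ := exists_hasDerivAt_eq_slope u u' h
      (fun z hz => (hd z (hsub hz)).continuousAt.continuousWithinAt)
      (fun z hz => hd z (hsub (Ioo_subset_Icc_self hz)))
    have h1 : u' x < u' c := hm hx (hsub (Ioo_subset_Icc_self hc)) hc.1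
    rw [hce, lt_div_iff₀ (by linarith)] at h1
    linarith
  · have hsub : Icc y x ⊆ Icc a b := Icc_subset_Icc hy.1 hx.2
    obtain ⟨c, hc, hce⟩ := exists_hasDerivAt_eq_slope u u' h
      (fun z hz => (hd z (hsub hz)).continuousAt.continuousWithinAt)
      (fun z hz => hd z (hsub (Ioo_subset_Icc_self hz)))
    have h1 : u' c < u' x := hm (hsub (Ioo_subset_Icc_self hc)) hx hc.2
    rw [hce, div_lt_iff₀ (by linarith)] at h1
    linarith

lemma hp_ii {g : ℝ → ℝ} (hg : IntegrableOn g (Icc (0:ℝ) 1)) {a b : ℝ} (ha : 0 ≤ a)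
    (hab : a ≤ b) (hb : b ≤ 1) : IntervalIntegrable g volume a b := by
  rw [intervalIntegrable_iff_integrableOn_Icc_of_le hab]
  exact hg.mono_set (Icc_subset_Icc ha hb)

lemma hp_diff {u u' u'' : ℝ → ℝ} (hu : C1AC u u' u'') {x y : ℝ} (hx : 0 ≤ x) (hxy : x ≤ y)
    (hy : y ≤ 1) : u' y - u' x = ∫ t in x..y, u'' t := by
  obtain ⟨_, _, hi, hF⟩ := hu
  rw [hF y ⟨by linarith, hy⟩, hF x ⟨hx, by linarith⟩,
    ← intervalIntegral.integral_add_adjacent_intervals (hp_ii hi le_rfl hx (by linarith))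
      (hp_ii hi hx hxy hy)]
  ring

lemma hp_contmul {f h : ℝ → ℝ} (hf : IntegrableOn f (Icc (0:ℝ) 1))
    (hh : ContinuousOn h (Icc (0:ℝ) 1)) :
    IntegrableOn (fun t => h t * f t) (Icc (0:ℝ) 1) :=
  hf.continuousOn_mul hh isCompact_Icc

lemma hp_mass {f : ℝ → ℝ} (hf : IsDensity f) {a b : ℝ} (ha : 0 ≤ a) (hab : a < b) (hb : b ≤ 1) :
    0 < ∫ t in a..b, f t :=
  intervalIntegral.intervalIntegral_pos_of_pos_on (hp_ii hf.2.1 ha hab.le hb)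
    (fun x hx => hf.1 x ⟨by linarith [hx.1], by linarith [hx.2]⟩) hab

lemma hp_tf {f : ℝ → ℝ} (hf : IsDensity f) {a b : ℝ} (ha : 0 ≤ a) (hab : a < b) (hb : b ≤ 1) :
    IntervalIntegrable (fun t => t * f t) volume a b :=
  hp_ii (hp_contmul (h := fun t => t) hf.2.1 continuousOn_id) ha hab.le hb

lemma hp_affine {f : ℝ → ℝ} (hf : IsDensity f) {a b : ℝ} (ha : 0 ≤ a) (hab : a < b)
    (hb : b ≤ 1) (v s c : ℝ) :
    ∫ t in a..b, (v + s * (t - c)) * f t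
      = v * (∫ t in a..b, f t) + s * ((∫ t in a..b, t * f t) - c * ∫ t in a..b, f t) := by
  have h1 := hp_tf hf ha hab hb
  have h2 := hp_ii hf.2.1 ha hab.le hb
  have : (fun t => (v + s * (t - c)) * f t)
      = fun t => (v - s * c) * f t + s * (t * f t) := by
    ext t; ring
  rw [this, intervalIntegral.integral_add (h2.const_mul _) (h1.const_mul _),
    intervalIntegral.integral_const_mul, intervalIntegral.integral_const_mul]
  ring

lemma hp_condMean_mul {f : ℝ → ℝ} (hf : IsDensity f) {a b : ℝ} (ha : 0 ≤ a) (hab : a < b)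
    (hb : b ≤ 1) : condMean f a b * (∫ t in a..b, f t) = ∫ t in a..b, t * f t :=
  div_mul_cancel₀ _ (hp_mass hf ha hab hb).ne'

lemma hp_affine_mean {f : ℝ → ℝ} (hf : IsDensity f) {a b : ℝ} (ha : 0 ≤ a) (hab : a < b)
    (hb : b ≤ 1) (v s : ℝ) :
    ∫ t in a..b, (v + s * (t - condMean f a b)) * f t = v * (∫ t in a..b, f t) := by
  rw [hp_affine hf ha hab hb, hp_condMean_mul hf ha hab hb]
  ring

lemma hp_condMean_mem {f : ℝ → ℝ} (hf : IsDensity f) {a b : ℝ} (ha : 0 ≤ a) (hab : a < b)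
    (hb : b ≤ 1) : condMean f a b ∈ Ioo a b := by
  have hM := hp_mass hf ha hab hb
  have hc := hp_condMean_mul hf ha hab hb
  have hI : ∀ c s : ℝ, IntervalIntegrable (fun t => (0 + s * (t - c)) * f t) volume a b :=
    fun c s => hp_ii (hp_contmul hf.2.1 (by fun_prop)) ha hab.le hb
  have h1 : 0 < ∫ t in a..b, (0 + 1 * (t - a)) * f t :=
    intervalIntegral.intervalIntegral_pos_of_pos_on (hI a 1)
      (fun x hx => mul_pos (by linarith [hx.1])
        (hf.1 x ⟨by linarith [hx.1], by linarith [hx.2]⟩)) hab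
  have h2 : 0 < ∫ t in a..b, (0 + (-1) * (t - b)) * f t :=
    intervalIntegral.intervalIntegral_pos_of_pos_on (hI b (-1))
      (fun x hx => mul_pos (by linarith [hx.2])
        (hf.1 x ⟨by linarith [hx.1], by linarith [hx.2]⟩)) hab
  rw [hp_affine hf ha hab hb, ← hc] at h1 h2
  constructor
  · by_contra! h
    nlinarith
  · by_contra! h
    nlinarith

lemma hp_comp {Q : Set ℝ} (hQ : IsPoolingSet Q) {x : ℝ} (hx : x ∈ Q) :
    0 ≤ compInf Q x ∧ compInf Q x < compSup Q x ∧ compSup Q x ≤ 1 ∧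
    Ioo (compInf Q x) (compSup Q x) ⊆ connectedComponentIn Q x ∧
    connectedComponentIn Q x ⊆ Icc (compInf Q x) (compSup Q x) := by
  obtain ⟨U, hU, rfl⟩ := hQ
  set Q := U ∩ Icc (0:ℝ) 1 with hQd
  set K := connectedComponentIn Q x with hK
  have hK01 : K ⊆ Icc 0 1 := (connectedComponentIn_subset Q x).trans inter_subset_right
  have hxK : x ∈ K := mem_connectedComponentIn hx
  have hne : K.Nonempty := ⟨x, hxK⟩
  have hbb : BddBelow K := ⟨0, fun y hy => (hK01 hy).1⟩
  have hba : BddAbove K := ⟨1, fun y hy => (hK01 hy).2⟩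
  have hpre : IsPreconnected K := isPreconnected_connectedComponentIn
  refine ⟨le_csInf hne fun y hy => (hK01 hy).1, ?_, csSup_le hne fun y hy => (hK01 hy).2, ?_, ?_⟩
  · obtain ⟨ε, hε, hball⟩ := Metric.isOpen_iff.1 hU x hx.1
    have hx01 := hx.2
    have hcd : max 0 (x - ε/2) < min 1 (x + ε/2) := by
      simp only [max_lt_iff, lt_min_iff]
      refine ⟨⟨by norm_num, by linarith [hx01.1, hx01.2]⟩, by linarith [hx01.1], by linarith⟩
    have hsub : Icc (max 0 (x - ε/2)) (min 1 (x + ε/2)) ⊆ Q := by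
      rintro y ⟨h1, h2⟩
      simp only [max_le_iff, le_min_iff] at h1 h2
      refine ⟨hball ?_, h1.1, h2.1⟩
      rw [Metric.mem_ball, Real.dist_eq, abs_lt]
      constructor <;> linarith
    have hsubK : Icc (max 0 (x - ε/2)) (min 1 (x + ε/2)) ⊆ K :=
      isPreconnected_Icc.subset_connectedComponentIn
        ⟨max_le hx01.1 (by linarith), le_min hx01.2 (by linarith)⟩ hsub
    calc compInf Q x ≤ max 0 (x - ε/2) := csInf_le hbb (hsubK ⟨le_rfl, hcd.le⟩)
      _ < min 1 (x + ε/2) := hcd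
      _ ≤ compSup Q x := le_csSup hba (hsubK ⟨hcd.le, le_rfl⟩)
  · rintro y ⟨h1, h2⟩
    obtain ⟨p, hp, hpy⟩ := exists_lt_of_csInf_lt hne h1
    obtain ⟨q, hq, hqy⟩ := exists_lt_of_lt_csSup hne h2
    exact hpre.Icc_subset hp hq ⟨hpy.le, hqy.le⟩
  · exact fun y hy => ⟨csInf_le hbb hy, le_csSup hba hy⟩

lemma hp_poolMean_comp {f : ℝ → ℝ} {Q : Set ℝ} {x y : ℝ}
    (hy : y ∈ connectedComponentIn Q x) :
    poolMean f Q y = condMean f (compInf Q x) (compSup Q x) := by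
  unfold poolMean compInf compSup
  rw [if_pos (connectedComponentIn_subset Q x hy), connectedComponentIn_eq hy]

lemma hp_poolMean_mem {f : ℝ → ℝ} (hf : IsDensity f) {Q : Set ℝ} (hQ : IsPoolingSet Q) {x : ℝ}
    (hx : x ∈ Icc (0:ℝ) 1) : poolMean f Q x ∈ Icc (0:ℝ) 1 := by
  by_cases hxQ : x ∈ Q
  · obtain ⟨h0, h1, h2, _⟩ := hp_comp hQ hxQ
    rw [poolMean, if_pos hxQ]
    have := hp_condMean_mem hf h0 h1 h2
    exact ⟨by linarith [this.1], by linarith [this.2]⟩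
  · rwa [poolMean, if_neg hxQ]

/-- Countable index for the components. -/
lemma hp_index {Q : Set ℝ} (hQ : IsPoolingSet Q) :
    ∃ S : Set ℝ, S.Countable ∧ S ⊆ Q ∧ (⋃ q : S, connectedComponentIn Q (q : ℝ)) = Q ∧
      Pairwise (Function.onFun Disjoint (fun q : S => connectedComponentIn Q (q : ℝ))) := by
  let C : Set (Set ℝ) := (connectedComponentIn Q) '' (Q ∩ range ((↑) : ℚ → ℝ))
  have hC : C.Countable := ((countable_range _).mono inter_subset_right).image _
  have hch : ∀ c : C, ∃ q ∈ Q, connectedComponentIn Q q = c := by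
    rintro ⟨c, q, hq, rfl⟩
    exact ⟨q, hq.1, rfl⟩
  choose r hrQ hrc using hch
  have : Countable C := hC
  refine ⟨range r, countable_range r, ?_, ?_, ?_⟩
  · rintro _ ⟨c, rfl⟩; exact hrQ c
  · apply Subset.antisymm
    · exact iUnion_subset fun q => connectedComponentIn_subset _ _
    · intro x hx
      obtain ⟨_, h1, _, hsub, _⟩ := hp_comp hQ hx
      obtain ⟨q, hq1, hq2⟩ := exists_rat_btwn h1
      have hqK := hsub ⟨hq1, hq2⟩
      have hc : connectedComponentIn Q x ∈ C :=
        ⟨q, ⟨connectedComponentIn_subset _ _ hqK, q, rfl⟩, (connectedComponentIn_eq hqK).symm⟩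
      refine mem_iUnion.2 ⟨⟨r ⟨_, hc⟩, mem_range_self _⟩, ?_⟩
      rw [hrc]
      exact mem_connectedComponentIn hx
  · rintro ⟨_, c, rfl⟩ ⟨_, d, rfl⟩ hne
    rw [Function.onFun, Set.disjoint_left]
    intro z hz hz'
    apply hne
    have : (c : Set ℝ) = d := by
      rw [← hrc c, ← hrc d, connectedComponentIn_eq hz, connectedComponentIn_eq hz']
    have : c = d := Subtype.ext this
    rw [this]

lemma hp_meas_comp {Q : Set ℝ} {x : ℝ} : MeasurableSet (connectedComponentIn Q x) :=
  (isPreconnected_iff_ordConnected.1 isPreconnected_connectedComponentIn).measurableSet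

lemma hp_pool_meas {Q : Set ℝ} (hQ : IsPoolingSet Q) : MeasurableSet Q := by
  obtain ⟨U, hU, rfl⟩ := hQ
  exact hU.measurableSet.inter measurableSet_Icc

lemma hp_pool_sub {Q : Set ℝ} (hQ : IsPoolingSet Q) : Q ⊆ Icc 0 1 := by
  obtain ⟨U, hU, rfl⟩ := hQ
  exact inter_subset_right

lemma hp_pool_int {f u : ℝ → ℝ} (hf : IsDensity f) (hu : ContinuousOn u (Icc (0:ℝ) 1))
    {Q : Set ℝ} (hQ : IsPoolingSet Q) :
    IntegrableOn (fun θ => u (poolMean f Q θ) * f θ) (Icc (0:ℝ) 1) := by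
  obtain ⟨B, hB⟩ := isCompact_Icc.exists_bound_of_continuousOn hu
  refine Integrable.bdd_mul (c := B) hf.2.1 ?_ ?_
  · obtain ⟨S, hS, hSQ, hSU, hSd⟩ := hp_index hQ
    have : Countable S := hS
    have hun : Icc (0:ℝ) 1 = (⋃ q : S, connectedComponentIn Q (q : ℝ)) ∪ (Icc (0:ℝ) 1 \ Q) := by
      rw [hSU, union_diff_cancel (hp_pool_sub hQ)]
    rw [hun, aestronglyMeasurable_union_iff, aestronglyMeasurable_iUnion_iff]
    refine ⟨fun q => ?_, ?_⟩
    · refine AEStronglyMeasurable.congr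
        (f := fun _ => u (condMean f (compInf Q q) (compSup Q q))) aestronglyMeasurable_const ?_
      filter_upwards [ae_restrict_mem hp_meas_comp] with y hy
      rw [hp_poolMean_comp hy]
    · have hm : MeasurableSet (Icc (0:ℝ) 1 \ Q) := measurableSet_Icc.diff (hp_pool_meas hQ)
      refine AEStronglyMeasurable.congr (f := u)
        ((hu.mono diff_subset).aestronglyMeasurable hm) ?_
      filter_upwards [ae_restrict_mem hm] with y hy
      rw [poolMean, if_neg hy.2]
  · filter_upwards [ae_restrict_mem measurableSet_Icc] with x hx
    exact hB _ (hp_poolMean_mem hf hQ hx)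

lemma hp_upper {f u p : ℝ → ℝ} (hf : IsDensity f) (hu : ContinuousOn u (Icc (0:ℝ) 1))
    (hp : ContinuousOn p (Icc (0:ℝ) 1))
    (hsup : ∀ x ∈ Icc (0:ℝ) 1, ∃ s : ℝ, ∀ y ∈ Icc (0:ℝ) 1, u x + s * (y - x) ≤ p y)
    {Q : Set ℝ} (hQ : IsPoolingSet Q) :
    poolValue f u Q ≤ ∫ θ in (0:ℝ)..1, p θ * f θ := by
  have hI1 := hp_pool_int hf hu hQ
  have hI2 := hp_contmul hf.2.1 hp
  have hQs := hp_pool_sub hQ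
  have hQm := hp_pool_meas hQ
  unfold poolValue
  rw [intervalIntegral.integral_of_le zero_le_one, intervalIntegral.integral_of_le zero_le_one,
    ← integral_Icc_eq_integral_Ioc, ← integral_Icc_eq_integral_Ioc,
    ← union_diff_cancel hQs,
    setIntegral_union disjoint_sdiff_right (measurableSet_Icc.diff hQm) (hI1.mono_set hQs)
      (hI1.mono_set diff_subset),
    setIntegral_union disjoint_sdiff_right (measurableSet_Icc.diff hQm) (hI2.mono_set hQs)
      (hI2.mono_set diff_subset)]
  refine add_le_add ?_ ?_
  · obtain ⟨S, hS, hSQ, hSU, hSd⟩ := hp_index hQ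
    have : Countable S := hS
    have h1 := hasSum_integral_iUnion (μ := volume) (fun q : S => hp_meas_comp) hSd
      (f := fun θ => u (poolMean f Q θ) * f θ) (by rw [hSU]; exact hI1.mono_set hQs)
    have h2 := hasSum_integral_iUnion (μ := volume) (fun q : S => hp_meas_comp) hSd
      (f := fun θ => p θ * f θ) (by rw [hSU]; exact hI2.mono_set hQs)
    rw [hSU] at h1 h2
    refine hasSum_le (fun q => ?_) h1 h2
    obtain ⟨ha, hab, hb, hK1, hK2⟩ := hp_comp hQ (hSQ q.2)
    rw [setIntegral_congr_fun (g := fun θ => u (condMean f (compInf Q q) (compSup Q q)) * f θ)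
      hp_meas_comp (fun y hy => by simp only [hp_poolMean_comp hy])]
    set a := compInf Q q
    set b := compSup Q q
    have hae : connectedComponentIn Q (q : ℝ) =ᵐ[volume] Ioc a b := by
      refine Filter.EventuallyLE.antisymm ?_ ?_
      · exact (HasSubset.Subset.eventuallyLE hK2).trans_eq Ioc_ae_eq_Icc.symm
      · exact Ioo_ae_eq_Ioc.symm.trans_le (HasSubset.Subset.eventuallyLE hK1)
    rw [setIntegral_congr_set hae, setIntegral_congr_set hae,
      ← intervalIntegral.integral_of_le hab.le, ← intervalIntegral.integral_of_le hab.le,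
      intervalIntegral.integral_const_mul]
    have hm := hp_condMean_mem hf ha hab hb
    obtain ⟨s, hs⟩ := hsup (condMean f a b) ⟨by linarith [hm.1], by linarith [hm.2]⟩
    rw [← hp_affine_mean hf ha hab hb _ s]
    refine intervalIntegral.integral_mono_on hab.le
      (hp_ii (hp_contmul hf.2.1 (by fun_prop)) ha hab.le hb) (hp_ii hI2 ha hab.le hb) ?_
    intro y hy
    have hy' : y ∈ Icc (0:ℝ) 1 := ⟨by linarith [hy.1], by linarith [hy.2]⟩
    exact mul_le_mul_of_nonneg_right (hs y hy') (hf.1 y hy').le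
  · refine setIntegral_mono_on (hI1.mono_set diff_subset) (hI2.mono_set diff_subset)
      (measurableSet_Icc.diff hQm) ?_
    intro y hy
    rw [poolMean, if_neg hy.2]
    obtain ⟨s, hs⟩ := hsup y hy.1
    have := hs y hy.1
    exact mul_le_mul_of_nonneg_right (by linarith) (hf.1 y hy.1).le

lemma hp_value {f u : ℝ → ℝ} (hf : IsDensity f) (hu : ContinuousOn u (Icc (0:ℝ) 1))
    {b s : ℝ} (hb0 : 0 < b) (hb1 : b < 1) {p : ℝ → ℝ} (hp : ContinuousOn p (Icc (0:ℝ) 1))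
    (hpl : ∀ x ∈ Icc 0 b, p x = u (condMean f 0 b) + s * (x - condMean f 0 b))
    (hpr : ∀ x ∈ Icc b 1, p x = u x) (hP : IsPoolingSet (Ico 0 b)) :
    poolValue f u (Ico 0 b) = ∫ θ in (0:ℝ)..1, p θ * f θ := by
  have hI1 := hp_pool_int hf hu hP
  have hI2 := hp_contmul hf.2.1 hp
  unfold poolValue
  rw [← intervalIntegral.integral_add_adjacent_intervals (hp_ii hI1 le_rfl hb0.le hb1.le)
      (hp_ii hI1 hb0.le hb1.le le_rfl),
    ← intervalIntegral.integral_add_adjacent_intervals (hp_ii hI2 le_rfl hb0.le hb1.le)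
      (hp_ii hI2 hb0.le hb1.le le_rfl)]
  congr 1
  · have e1 : ∫ θ in (0:ℝ)..b, p θ * f θ = u (condMean f 0 b) * ∫ θ in (0:ℝ)..b, f θ := by
      rw [← hp_affine_mean hf le_rfl hb0 hb1.le _ s]
      refine intervalIntegral.integral_congr fun x hx => ?_
      rw [uIcc_of_le hb0.le] at hx
      simp only [hpl x hx]
    rw [e1, ← intervalIntegral.integral_const_mul, intervalIntegral.integral_of_le hb0.le,
      intervalIntegral.integral_of_le hb0.le, integral_Ioc_eq_integral_Ioo,
      integral_Ioc_eq_integral_Ioo]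
    refine setIntegral_congr_fun measurableSet_Ioo fun x hx => ?_
    have hxm : x ∈ Ico 0 b := ⟨hx.1.le, hx.2⟩
    have : poolMean f (Ico 0 b) x = condMean f 0 b := by
      rw [poolMean, if_pos hxm, compInf, compSup,
        isPreconnected_Ico.connectedComponentIn hxm, csInf_Ico hb0, csSup_Ico hb0]
    simp only [this]
  · refine intervalIntegral.integral_congr fun x hx => ?_
    rw [uIcc_of_le hb1.le] at hx
    have : poolMean f (Ico 0 b) x = x := by
      rw [poolMean, if_neg (fun h => absurd h.2 (not_lt.2 hx.1))]
    simp only [this, hpr x hx]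

/-- one inflection point `θ^L`; if the tangency condition holds at
some `θ_*^L ∈ (θ^L,1)` with `m_*^L = E_F[θ|(0,θ_*^L)]`, then the pooling set
`[0,θ_*^L)` is optimal for `u`, and `m_*^L ∈ (0,θ^L)`. -/
theorem censorship_optimal (f : ℝ → ℝ) (hf : IsDensity f)
    (u u' u'' : ℝ → ℝ) (hu : C1AC u u' u'')
    (θL : ℝ) (hθL : θL ∈ Ioo (0:ℝ) 1)
    (hneg : ∀ θ ∈ Ico (0:ℝ) θL, u'' θ < 0)
    (hpos : ∀ θ ∈ Ioc θL (1:ℝ), 0 < u'' θ)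
    (θsL : ℝ) (hθsL : θsL ∈ Ioo θL 1)
    (htan : u (condMean f 0 θsL) +
        u' (condMean f 0 θsL) * (θsL - condMean f 0 θsL) = u θsL) :
    IsOptimal f u (Ico (0:ℝ) θsL) ∧ condMean f 0 θsL ∈ Ioo 0 θL := by
  obtain ⟨hL0, hL1⟩ := hθL
  obtain ⟨hsL, hs1⟩ := hθsL
  have hs0 : 0 < θsL := hL0.trans hsL
  have hd := hu.1
  have hi := hu.2.2.1
  have huc : ContinuousOn u (Icc (0:ℝ) 1) :=
    fun x hx => (hd x hx).continuousAt.continuousWithinAt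
  have hm := hp_condMean_mem hf le_rfl hs0 hs1.le
  set m := condMean f 0 θsL with hmdef
  have hmono : StrictMonoOn u' (Icc θL 1) := by
    intro x hx y hy hxy
    have h1 := hp_diff hu (by linarith [hx.1]) hxy.le hy.2
    have h2 : 0 < ∫ t in x..y, u'' t := intervalIntegral.intervalIntegral_pos_of_pos_on
      (hp_ii hi (by linarith [hx.1]) hxy.le hy.2)
      (fun z hz => hpos z ⟨by linarith [hx.1, hz.1], by linarith [hz.2, hy.2]⟩) hxy
    linarith
  have hanti : StrictMonoOn (fun x => - u' x) (Icc 0 θL) := by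
    intro x hx y hy hxy
    have h1 := hp_diff hu hx.1 hxy.le (by linarith [hy.2])
    have h2 : 0 < ∫ t in x..y, - u'' t := intervalIntegral.intervalIntegral_pos_of_pos_on
      (hp_ii hi hx.1 hxy.le (by linarith [hy.2])).neg
      (fun z hz => neg_pos.2 (hneg z ⟨by linarith [hx.1, hz.1], by linarith [hz.2, hy.2]⟩)) hxy
    rw [intervalIntegral.integral_neg] at h2
    show - u' x < - u' y
    linarith
  have hcvs : ∀ x ∈ Icc θL 1, ∀ y ∈ Icc θL 1, x ≠ y → u x + u' x * (y - x) < u y :=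
    fun x hx y hy hxy => hp_tangent
      (fun z hz => hd z ⟨by linarith [hz.1], hz.2⟩) hmono hx hy hxy
  have hcv : ∀ x ∈ Icc θL 1, ∀ y ∈ Icc θL 1, u x + u' x * (y - x) ≤ u y := by
    intro x hx y hy
    rcases eq_or_ne x y with rfl | h
    · simp
    · exact (hcvs x hx y hy h).le
  have hcc : ∀ x ∈ Icc 0 θL, ∀ y ∈ Icc 0 θL, u y ≤ u x + u' x * (y - x) := by
    intro x hx y hy
    rcases eq_or_ne x y with rfl | h
    · simp
    · have := hp_tangent (u := fun x => - u x) (u' := fun x => - u' x)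
        (fun z hz => (hd z ⟨hz.1, by linarith [hz.2]⟩).neg) hanti hx hy h
      linarith
  have hmL : m < θL := by
    by_contra! h
    have := hcvs m ⟨h, by linarith [hm.2]⟩ θsL ⟨hsL.le, hs1.le⟩ hm.2.ne
    linarith
  have hm' : m ∈ Icc 0 θL := ⟨hm.1.le, hmL.le⟩
  have huL := hcc m hm' θL ⟨hL0.le, le_rfl⟩
  -- slope comparison
  have hslope : u' m ≤ u' θsL := by
    have h2 := hcv θsL ⟨hsL.le, hs1.le⟩ θL ⟨le_rfl, hL1.le⟩
    by_contra! h
    nlinarith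
  have hbelow : ∀ x ∈ Icc 0 θsL, u x ≤ u m + u' m * (x - m) := by
    intro x hx
    rcases le_total x θL with h | h
    · exact hcc m hm' x ⟨hx.1, h⟩
    · have hx' : x ∈ Icc θL 1 := ⟨h, by linarith [hx.2]⟩
      have h1 := hcv x hx' θL ⟨le_rfl, hL1.le⟩
      have h2 := hcv x hx' θsL ⟨hsL.le, hs1.le⟩
      have h3 := mul_le_mul_of_nonneg_left (h1.trans huL) (sub_nonneg.2 hx.2)
      have h4 := mul_le_mul_of_nonneg_left (h2.trans htan.ge) (sub_nonneg.2 h)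
      have h5 : (θsL - θL) * u x ≤ (θsL - θL) * (u m + u' m * (x - m)) := by linarith
      exact le_of_mul_le_mul_left h5 (by linarith)
  let p : ℝ → ℝ := fun x => (u m + u' m * (min x θsL - m)) + u (max x θsL) - u θsL
  have hpl : ∀ x ∈ Icc 0 θsL, p x = u m + u' m * (x - m) := by
    intro x hx
    simp only [p, min_eq_left hx.2, max_eq_right hx.2]
    ring
  have hpr : ∀ x ∈ Icc θsL 1, p x = u x := by
    intro x hx
    simp only [p, min_eq_right hx.1, max_eq_left hx.1]
    linarith
  have hpc : ContinuousOn p (Icc (0:ℝ) 1) := by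
    have h1 : ContinuousOn (fun x => u (max x θsL)) (Icc (0:ℝ) 1) :=
      huc.comp (by fun_prop) fun x hx => ⟨le_max_of_le_left hx.1, max_le hx.2 hs1.le⟩
    have h2 : ContinuousOn (fun x => u m + u' m * (min x θsL - m)) (Icc (0:ℝ) 1) := by fun_prop
    exact (h2.add h1).sub continuousOn_const
  have hsup : ∀ x ∈ Icc (0:ℝ) 1, ∃ s : ℝ, ∀ y ∈ Icc (0:ℝ) 1, u x + s * (y - x) ≤ p y := by
    intro x hx
    rcases le_total x θsL with hxs | hxs
    · refine ⟨u' m, fun y hy => ?_⟩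
      have hb := hbelow x ⟨hx.1, hxs⟩
      rcases le_total y θsL with hys | hys
      · rw [hpl y ⟨hy.1, hys⟩]; linarith
      · rw [hpr y ⟨hys, hy.2⟩]
        have h1 := hcv θsL ⟨hsL.le, hs1.le⟩ y ⟨by linarith, hy.2⟩
        have h2 := mul_le_mul_of_nonneg_right hslope (sub_nonneg.2 hys)
        linarith
    · refine ⟨u' x, fun y hy => ?_⟩
      have hx' : x ∈ Icc θL 1 := ⟨by linarith, hx.2⟩
      rcases le_total y θsL with hys | hys
      · rw [hpl y ⟨hy.1, hys⟩]
        have h1 := hcv x hx' θsL ⟨hsL.le, hs1.le⟩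
        have h0 : u' θsL ≤ u' x := hmono.monotoneOn ⟨hsL.le, hs1.le⟩ hx' hxs
        have h2 := mul_le_mul_of_nonneg_right (hslope.trans h0) (sub_nonneg.2 hys)
        linarith
      · rw [hpr y ⟨hys, hy.2⟩]
        exact hcv x hx' y ⟨by linarith, hy.2⟩
  have hP : IsPoolingSet (Ico 0 θsL) := by
    refine ⟨Iio θsL, isOpen_Iio, ?_⟩
    ext x
    simp only [mem_Ico, mem_inter_iff, mem_Iio, mem_Icc]
    constructor
    · rintro ⟨h1, h2⟩
      exact ⟨h2, h1, by linarith⟩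
    · rintro ⟨h1, h2, _⟩
      exact ⟨h2, h1⟩
  refine ⟨⟨hP, fun Q hQ => ?_⟩, hm.1, hmL⟩
  rw [hp_value hf huc hs0 hs1 hpc hpl hpr hP]
  exact hp_upper hf huc hpc hsup hQ
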